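/- arXiv:2103.02079 — 7 statements merged into one kernel-verified Lean document; each statement's English description precedes it below -/
import Mathlib

section
/- Assume the dataset D has ℓ¹ diameter at most 1. Then for every z ∈ ℝ^d, the x₀-containing part p₁(z) = (1/C(n,k)) · Σ_{S' ⊆ D', |S'| = k−1} φ_σ(z − (1/k)(x₀ + Σ_{x ∈ S'} x)) of the mixup-plus-noise density of D satisfies the two-sided bound exp(−1/(kσ)) · (k/n) · q(z) ≤ p₁(z) ≤ exp(1/(kσ)) · (k/n) · q(z), where q is the mixup-plus-noise output density of D' = D \ {x₀}. -/
open Finset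

/-- The d-dimensional isotropic Laplacian density with scale σ. -/
noncomputable def laplacianDensity (d : ℕ) (σ : ℝ) (η : Fin d → ℝ) : ℝ :=
  ((2 * σ) ^ d)⁻¹ * Real.exp (-(∑ i, |η i|) / σ)

/-- The mixup-plus-noise output density of a finite dataset `P`. -/
noncomputable def mixupDensity (d : ℕ) (σ : ℝ) (k : ℕ) (P : Finset (Fin d → ℝ))
    (z : Fin d → ℝ) : ℝ :=
  ((P.card.choose k : ℝ))⁻¹ *
    ∑ S ∈ P.powersetCard k, laplacianDensity d σ (z - (k : ℝ)⁻¹ • ∑ x ∈ S, x)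

theorem mixup_double_count {α : Type*} [DecidableEq α] (P : Finset α) (k : ℕ)
    (h : Finset α → Finset α → ℝ) :
    ∑ S ∈ P.powersetCard k, ∑ y ∈ P \ S, h S (insert y S)
      = ∑ T ∈ P.powersetCard (k + 1), ∑ y ∈ T, h (T.erase y) T := by
  rw [Finset.sum_sigma', Finset.sum_sigma']
  refine Finset.sum_bij' (fun a _ => ⟨insert a.2 a.1, a.2⟩) (fun a _ => ⟨a.1.erase a.2, a.2⟩)
    ?_ ?_ ?_ ?_ ?_
  · rintro ⟨S, y⟩ hS
    simp only [mem_sigma, mem_powersetCard, mem_sdiff] at hS ⊢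
    obtain ⟨⟨h1, h2⟩, h3, h4⟩ := hS
    exact ⟨⟨insert_subset h3 h1, by rw [card_insert_of_notMem h4, h2]⟩, mem_insert_self _ _⟩
  · rintro ⟨S, y⟩ hS
    simp only [mem_sigma, mem_powersetCard, mem_sdiff] at hS ⊢
    obtain ⟨⟨h1, h2⟩, h3⟩ := hS
    exact ⟨⟨(erase_subset _ _).trans h1, by rw [card_erase_of_mem h3, h2]; rfl⟩, h1 h3,
      notMem_erase _ _⟩
  · rintro ⟨S, y⟩ hS
    simp only [mem_sigma, mem_powersetCard, mem_sdiff] at hS ⊢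
    rw [erase_insert hS.2.2]
  · rintro ⟨S, y⟩ hS
    simp only [mem_sigma, mem_powersetCard, mem_sdiff] at hS ⊢
    rw [insert_erase hS.2]
  · rintro ⟨S, y⟩ hS
    simp only [mem_sigma, mem_powersetCard, mem_sdiff] at hS ⊢
    rw [erase_insert hS.2.2]

theorem mixup_sum_left {α : Type*} [DecidableEq α] (P : Finset α) (k : ℕ)
    (f : Finset α → ℝ) :
    ∑ S ∈ P.powersetCard k, ∑ _y ∈ P \ S, f S
      = ((P.card - k : ℕ) : ℝ) * ∑ S ∈ P.powersetCard k, f S := by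
  rw [Finset.mul_sum]
  refine Finset.sum_congr rfl fun S hS => ?_
  rw [mem_powersetCard] at hS
  rw [sum_const, card_sdiff_of_subset hS.1, hS.2, nsmul_eq_mul]

theorem mixup_sum_right {α : Type*} [DecidableEq α] (P : Finset α) (k : ℕ)
    (g : Finset α → ℝ) :
    ∑ S ∈ P.powersetCard k, ∑ y ∈ P \ S, g (insert y S)
      = ((k + 1 : ℕ) : ℝ) * ∑ S ∈ P.powersetCard (k + 1), g S := by
  rw [mixup_double_count P k (fun _ T => g T), Finset.mul_sum]
  refine Finset.sum_congr rfl fun S hS => ?_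
  rw [mem_powersetCard] at hS
  rw [sum_const, hS.2, nsmul_eq_mul]

theorem laplacian_ratio (d : ℕ) (σ : ℝ) (hσ : 0 < σ) (u v : Fin d → ℝ) (c : ℝ)
    (h : ∑ i, |u i - v i| ≤ c) :
    laplacianDensity d σ u ≤ Real.exp (c / σ) * laplacianDensity d σ v := by
  unfold laplacianDensity
  rw [mul_left_comm, ← Real.exp_add]
  gcongr
  rw [← add_div]
  gcongr
  have : ∑ i, |v i| ≤ ∑ i, |u i| + ∑ i, |u i - v i| := by
    rw [← sum_add_distrib]
    refine sum_le_sum fun i _ => ?_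
    have := abs_sub_abs_le_abs_sub (v i) (u i)
    rw [abs_sub_comm] at this
    linarith
  linarith

theorem laplacian_swap (d : ℕ) (σ : ℝ) (hσ : 0 < σ) (k : ℕ) (hk : 1 ≤ k)
    (z x y s : Fin d → ℝ) (h : ∑ i, |x i - y i| ≤ 1) :
    laplacianDensity d σ (z - (k : ℝ)⁻¹ • (x + s))
      ≤ Real.exp (1 / (k * σ)) * laplacianDensity d σ (z - (k : ℝ)⁻¹ • (y + s)) := by
  have hk' : (0 : ℝ) < k := by exact_mod_cast hk
  have := laplacian_ratio d σ hσ (z - (k : ℝ)⁻¹ • (x + s)) (z - (k : ℝ)⁻¹ • (y + s))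
    ((k : ℝ)⁻¹) ?_
  · convert this using 3
    field_simp
  · have e : ∀ i, |(z - (k : ℝ)⁻¹ • (x + s)) i - (z - (k : ℝ)⁻¹ • (y + s)) i|
        = (k : ℝ)⁻¹ * |x i - y i| := by
      intro i
      rw [← abs_of_pos (inv_pos.mpr hk'), ← abs_mul, abs_of_pos (inv_pos.mpr hk'),
        ← abs_neg]
      congr 1
      simp only [Pi.sub_apply, Pi.smul_apply, Pi.add_apply, smul_eq_mul]
      ring
    simp only [e]
    rw [← mul_sum]
    exact mul_le_of_le_one_right (inv_pos.mpr hk').le h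

/-- If `D` has ℓ¹ diameter at most 1, the x₀-containing part `p₁` of the mixup-plus-noise
density of `D` satisfies
`exp(−1/(kσ))·(k/n)·q(z) ≤ p₁(z) ≤ exp(1/(kσ))·(k/n)·q(z)`. -/
theorem mixup_density_x0_part_two_sided_bound
    (d : ℕ) (hd : 1 ≤ d) (σ : ℝ) (hσ : 0 < σ)
    (D : Finset (Fin d → ℝ)) (n : ℕ) (hn : D.card = n)
    (hdiam : ∀ x ∈ D, ∀ y ∈ D, ∑ i, |x i - y i| ≤ 1)
    (x₀ : Fin d → ℝ) (hx₀ : x₀ ∈ D)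
    (k : ℕ) (hk1 : 1 ≤ k) (hkn : k ≤ n - 1)
    (z : Fin d → ℝ) :
    Real.exp (-(1 / (k * σ))) * ((k : ℝ) / n) * mixupDensity d σ k (D.erase x₀) z
        ≤ ((n.choose k : ℝ))⁻¹ *
            ∑ S' ∈ (D.erase x₀).powersetCard (k - 1),
              laplacianDensity d σ (z - (k : ℝ)⁻¹ • (x₀ + ∑ x ∈ S', x)) ∧
    ((n.choose k : ℝ))⁻¹ *
        ∑ S' ∈ (D.erase x₀).powersetCard (k - 1),
          laplacianDensity d σ (z - (k : ℝ)⁻¹ • (x₀ + ∑ x ∈ S', x))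
      ≤ Real.exp (1 / (k * σ)) * ((k : ℝ) / n) * mixupDensity d σ k (D.erase x₀) z := by
  obtain ⟨j, rfl⟩ : ∃ j, k = j + 1 := ⟨k - 1, by omega⟩
  have hcard : (D.erase x₀).card = n - 1 := by rw [card_erase_of_mem hx₀, hn]
  obtain ⟨m, rfl⟩ : ∃ m, n = m + 1 := ⟨n - 1, by omega⟩
  simp only [Nat.add_sub_cancel] at hkn hcard ⊢
  unfold mixupDensity
  rw [hcard]
  set P := D.erase x₀ with hP
  set f : Finset (Fin d → ℝ) → ℝ := fun S =>
    laplacianDensity d σ (z - ((j + 1 : ℕ) : ℝ)⁻¹ • (x₀ + ∑ x ∈ S, x)) with hf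
  set g : Finset (Fin d → ℝ) → ℝ := fun S =>
    laplacianDensity d σ (z - ((j + 1 : ℕ) : ℝ)⁻¹ • ∑ x ∈ S, x) with hg
  set E := 1 / (((j + 1 : ℕ) : ℝ) * σ) with hE
  have hfg : ∀ S ∈ P.powersetCard j, ∀ y ∈ P \ S, f S ≤ Real.exp E * g (insert y S) := by
    intro S hS y hy
    rw [mem_sdiff] at hy
    simp only [hf, hg, sum_insert hy.2]
    exact laplacian_swap d σ hσ (j + 1) hk1 z _ _ _ (hdiam _ hx₀ _ (mem_of_mem_erase hy.1))
  have hgf : ∀ S ∈ P.powersetCard j, ∀ y ∈ P \ S, g (insert y S) ≤ Real.exp E * f S := by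
    intro S hS y hy
    rw [mem_sdiff] at hy
    simp only [hf, hg, sum_insert hy.2]
    exact laplacian_swap d σ hσ (j + 1) hk1 z _ _ _ (hdiam _ (mem_of_mem_erase hy.1) _ hx₀)
  have h1 := sum_le_sum fun S hS => sum_le_sum (hfg S hS)
  have h2 := sum_le_sum fun S hS => sum_le_sum (hgf S hS)
  simp only [← mul_sum] at h1 h2
  rw [mixup_sum_left, mixup_sum_right, hcard] at h1 h2
  have hF : ∑ S ∈ P.powersetCard j,
    laplacianDensity d σ (z - ((j + 1 : ℕ) : ℝ)⁻¹ • (x₀ + ∑ x ∈ S, x))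
      = ∑ S ∈ P.powersetCard j, f S := rfl
  have hch : ((m + 1 : ℕ) : ℝ) * (m.choose (j + 1) : ℝ)
      = ((m + 1).choose (j + 1) : ℝ) * ((m - j : ℕ) : ℝ) := by
    have := Nat.add_one_mul_choose_eq m j
    have h3 := Nat.choose_mul_succ_eq m (j + 1)
    have h4 : m + 1 - (j + 1) = m - j := by omega
    rw [h4] at h3
    rw [mul_comm]
    exact_mod_cast h3
  have p1 : (0 : ℝ) < (m.choose (j + 1) : ℝ) := by exact_mod_cast Nat.choose_pos hkn
  have p2 : (0 : ℝ) < ((m + 1).choose (j + 1) : ℝ) := by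
    exact_mod_cast Nat.choose_pos (by omega)
  have p3 : (0 : ℝ) < ((m - j : ℕ) : ℝ) := by exact_mod_cast (by omega : 0 < m - j)
  have p4 : (0 : ℝ) < ((m + 1 : ℕ) : ℝ) := by positivity
  have hE0 := Real.exp_pos E
  rw [Real.exp_neg]
  generalize ∑ S ∈ P.powersetCard j, f S = F at *
  generalize ∑ S ∈ P.powersetCard (j + 1), g S = G at *
  generalize Real.exp E = e at *
  generalize ((m + 1 : ℕ) : ℝ) = N at *
  generalize ((j + 1 : ℕ) : ℝ) = K at *
  generalize ((m - j : ℕ) : ℝ) = M at *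
  generalize (m.choose (j + 1) : ℝ) = A at *
  generalize ((m + 1).choose (j + 1) : ℝ) = B at *
  have key : ∀ t : ℝ, t * (K / N) * (A⁻¹ * G) = (t * (K * G)) / (B * M) := by
    intro t
    rw [← hch]
    field_simp
  have key2 : B⁻¹ * F = (M * F) / (B * M) := by field_simp
  rw [key, key, key2]
  constructor
  · refine div_le_div_of_nonneg_right ?_ (by positivity)
    rw [inv_mul_le_iff₀ hE0]
    exact h2
  · gcongr
end

section
/- Assume the dataset D has ℓ¹ diameter at most 1. Then for every z ∈ ℝ^d, the mixup-plus-noise output densities satisfy q(z) ≤ (n / (n − k + k·exp(−1/(kσ)))) · p(z). -/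
open Finset

theorem laplacian_shift (d : ℕ) (σ : ℝ) (hσ : 0 < σ) (a b : Fin d → ℝ) (c : ℝ)
    (h : ∑ i, |a i - b i| ≤ c) :
    Real.exp (-(c / σ)) * laplacianDensity d σ a ≤ laplacianDensity d σ b := by
  unfold laplacianDensity
  rw [mul_left_comm, ← Real.exp_add]
  apply mul_le_mul_of_nonneg_left _ (by positivity)
  apply Real.exp_le_exp.mpr
  rw [← neg_div, ← add_div]
  apply div_le_div_of_nonneg_right _ hσ.le
  have : ∑ i, |b i| ≤ ∑ i, |a i| + ∑ i, |a i - b i| := by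
    rw [← Finset.sum_add_distrib]
    apply Finset.sum_le_sum
    intro i _
    have := abs_sub_abs_le_abs_sub (b i) (a i)
    rw [abs_sub_comm (b i)] at this
    linarith
  linarith

theorem double_count {α : Type*} [DecidableEq α] (P : Finset α) (j : ℕ) (g : Finset α → ℝ) :
    ∑ S ∈ P.powersetCard (j + 1), ∑ x ∈ S, g (S.erase x)
      = ((P.card : ℝ) - j) * ∑ T ∈ P.powersetCard j, g T := by
  have h1 : ∑ S ∈ P.powersetCard (j + 1), ∑ x ∈ S, g (S.erase x)
      = ∑ T ∈ P.powersetCard j, ∑ x ∈ P \ T, g T := by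
    rw [Finset.sum_sigma', Finset.sum_sigma']
    refine Finset.sum_bij' (fun a _ => ⟨a.1.erase a.2, a.2⟩) (fun b _ => ⟨insert b.2 b.1, b.2⟩)
      ?_ ?_ ?_ ?_ ?_
    · rintro ⟨S, x⟩ h
      simp only [Finset.mem_sigma, Finset.mem_powersetCard, Finset.mem_sdiff] at h ⊢
      obtain ⟨⟨h1, h2⟩, h3⟩ := h
      refine ⟨⟨(Finset.erase_subset _ _).trans h1, ?_⟩, h1 h3, by simp⟩
      rw [Finset.card_erase_of_mem h3, h2]; rfl
    · rintro ⟨T, x⟩ h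
      simp only [Finset.mem_sigma, Finset.mem_powersetCard, Finset.mem_sdiff] at h ⊢
      obtain ⟨⟨h1, h2⟩, h3, h4⟩ := h
      refine ⟨⟨Finset.insert_subset h3 h1, ?_⟩, by simp⟩
      rw [Finset.card_insert_of_notMem h4, h2]
    · rintro ⟨S, x⟩ h
      simp only [Finset.mem_sigma] at h
      simp [Finset.insert_erase h.2]
    · rintro ⟨T, x⟩ h
      simp only [Finset.mem_sigma, Finset.mem_sdiff] at h
      simp [Finset.erase_insert h.2.2]
    · rintro ⟨S, x⟩ h
      rfl
  rw [h1, Finset.mul_sum]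
  apply Finset.sum_congr rfl
  intro T hT
  rw [Finset.mem_powersetCard] at hT
  rw [Finset.sum_const, nsmul_eq_mul, Finset.cast_card_sdiff hT.1, hT.2]

/-- If `D` has ℓ¹ diameter at most 1, then
`q(z) ≤ (n / (n − k + k·exp(−1/(kσ))))·p(z)` for every `z ∈ ℝ^d`. -/
theorem mixup_density_lower_ratio_bound
    (d : ℕ) (hd : 1 ≤ d) (σ : ℝ) (hσ : 0 < σ)
    (D : Finset (Fin d → ℝ)) (n : ℕ) (hn : D.card = n)
    (hdiam : ∀ x ∈ D, ∀ y ∈ D, ∑ i, |x i - y i| ≤ 1)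
    (x₀ : Fin d → ℝ) (hx₀ : x₀ ∈ D)
    (k : ℕ) (hk1 : 1 ≤ k) (hkn : k ≤ n - 1)
    (z : Fin d → ℝ) :
    mixupDensity d σ k (D.erase x₀) z
      ≤ ((n : ℝ) / ((n : ℝ) - k + k * Real.exp (-(1 / (k * σ))))) *
          mixupDensity d σ k D z := by
  classical
  obtain ⟨j, rfl⟩ : ∃ j, k = j + 1 := ⟨k - 1, by omega⟩
  obtain ⟨m, rfl⟩ : ∃ m, n = m + 1 := ⟨n - 1, by omega⟩
  have hjm : j + 1 ≤ m := by omega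
  have hcard : (D.erase x₀).card = m := by rw [Finset.card_erase_of_mem hx₀, hn]; rfl
  set P := D.erase x₀ with hP
  have hx₀P : x₀ ∉ P := Finset.notMem_erase _ _
  have hD : D = insert x₀ P := (Finset.insert_erase hx₀).symm
  set e := Real.exp (-(1 / (((j + 1 : ℕ) : ℝ) * σ))) with he
  have hepos : 0 < e := Real.exp_pos _
  set f : Finset (Fin d → ℝ) → ℝ := fun S =>
    laplacianDensity d σ (z - (((j + 1 : ℕ) : ℝ))⁻¹ • ∑ x ∈ S, x) with hf
  have hsplit : ∑ S ∈ D.powersetCard (j + 1), f S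
      = ∑ S ∈ P.powersetCard (j + 1), f S + ∑ T ∈ P.powersetCard j, f (insert x₀ T) := by
    rw [hD, Finset.powersetCard_succ_insert hx₀P, Finset.sum_union, Finset.sum_image]
    · intro A hA B hB hAB
      have hA' : x₀ ∉ A := fun h => hx₀P ((Finset.mem_powersetCard.mp hA).1 h)
      have hB' : x₀ ∉ B := fun h => hx₀P ((Finset.mem_powersetCard.mp hB).1 h)
      rw [← Finset.erase_insert hA', ← Finset.erase_insert hB']
      exact congrArg (fun s => s.erase x₀) hAB
    · rw [Finset.disjoint_left]
      intro S hS hS'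
      obtain ⟨T, -, rfl⟩ := Finset.mem_image.mp hS'
      exact hx₀P ((Finset.mem_powersetCard.mp hS).1 (Finset.mem_insert_self _ _))
  have hswap : ∀ S ∈ P.powersetCard (j + 1), ∀ x ∈ S,
      e * f S ≤ f (insert x₀ (S.erase x)) := by
    intro S hS x hx
    have hSP := (Finset.mem_powersetCard.mp hS).1
    have hxD : x ∈ D := Finset.mem_of_mem_erase (hSP hx)
    have hx₀S : x₀ ∉ S.erase x := fun h => hx₀P (hSP (Finset.mem_of_mem_erase h))
    have hkey := laplacian_shift d σ hσ (z - (((j + 1 : ℕ) : ℝ))⁻¹ • ∑ x ∈ S, x)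
      (z - (((j + 1 : ℕ) : ℝ))⁻¹ • ∑ x ∈ insert x₀ (S.erase x), x)
      ((((j + 1 : ℕ) : ℝ))⁻¹) ?_
    · have : ((((j + 1 : ℕ) : ℝ))⁻¹) / σ = 1 / (((j + 1 : ℕ) : ℝ) * σ) := by
        rw [one_div, mul_inv, div_eq_mul_inv]
      rw [this] at hkey
      exact hkey
    · rw [Finset.sum_insert hx₀S, ← Finset.add_sum_erase S (fun y => y) hx]
      have hpos : (0 : ℝ) ≤ (((j + 1 : ℕ) : ℝ))⁻¹ := by positivity
      have : ∀ i, |(z - (((j + 1 : ℕ) : ℝ))⁻¹ • (x + ∑ y ∈ S.erase x, y)) i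
          - (z - (((j + 1 : ℕ) : ℝ))⁻¹ • (x₀ + ∑ y ∈ S.erase x, y)) i|
          = (((j + 1 : ℕ) : ℝ))⁻¹ * |x₀ i - x i| := by
        intro i
        rw [← abs_of_nonneg hpos, ← abs_mul, abs_of_nonneg hpos]
        congr 1
        simp only [Pi.sub_apply, Pi.smul_apply, Pi.add_apply, smul_eq_mul]
        ring
      rw [Finset.sum_congr rfl (fun i _ => this i), ← Finset.mul_sum]
      exact mul_le_of_le_one_right hpos (hdiam x₀ hx₀ x hxD)
  set A := ∑ S ∈ P.powersetCard (j + 1), f S with hA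
  set B := ∑ T ∈ P.powersetCard j, f (insert x₀ T) with hB
  have hcount : ((j : ℝ) + 1) * e * A ≤ ((m : ℝ) - j) * B := by
    rw [← hcard, hB, ← double_count P j (fun T => f (insert x₀ T)), hA, Finset.mul_sum]
    apply Finset.sum_le_sum
    intro S hS
    have h1 := Finset.sum_le_sum (hswap S hS)
    rw [Finset.sum_const, (Finset.mem_powersetCard.mp hS).2, nsmul_eq_mul] at h1
    push_cast at h1
    linarith
  have hq : mixupDensity d σ (j + 1) P z = ((m.choose (j + 1) : ℕ) : ℝ)⁻¹ * A := by
    rw [mixupDensity, hcard]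
  have hp : mixupDensity d σ (j + 1) D z = (((m + 1).choose (j + 1) : ℕ) : ℝ)⁻¹ * (A + B) := by
    rw [mixupDensity, hn, ← hsplit]
  rw [hq, hp]
  have hch : ((m : ℝ) + 1) * (m.choose (j + 1) : ℝ)
      = ((m + 1).choose (j + 1) : ℝ) * ((m : ℝ) - j) := by
    have h1 := Nat.choose_mul_succ_eq m (j + 1)
    have h2 : ((m + 1 - (j + 1) : ℕ) : ℝ) = (m : ℝ) - j := by
      rw [Nat.cast_sub (by omega)]; push_cast; ring
    rw [← h2]
    have h3 : ((m.choose (j + 1) * (m + 1) : ℕ) : ℝ) =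
      (((m + 1).choose (j + 1) * (m + 1 - (j + 1)) : ℕ) : ℝ) := by rw [h1]
    rw [Nat.cast_mul, Nat.cast_mul] at h3
    rw [← h3]; push_cast; ring
  have hc1 : (0 : ℝ) < (m.choose (j + 1) : ℝ) := by
    exact_mod_cast Nat.choose_pos hjm
  have hc2 : (0 : ℝ) < ((m + 1).choose (j + 1) : ℝ) := by
    exact_mod_cast Nat.choose_pos (by omega)
  have hmj : (0 : ℝ) < (m : ℝ) - j := by
    have : ((j + 1 : ℕ) : ℝ) ≤ m := by exact_mod_cast hjm
    push_cast at this; linarith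
  have hden : (0 : ℝ) < ((m + 1 : ℕ) : ℝ) - ((j + 1 : ℕ) : ℝ) + ((j + 1 : ℕ) : ℝ) * e := by
    have : (0 : ℝ) < ((j + 1 : ℕ) : ℝ) * e := by positivity
    push_cast at this ⊢; linarith
  have hrat : ((m + 1 : ℕ) : ℝ) * (((m + 1).choose (j + 1) : ℕ) : ℝ)⁻¹
      = ((m : ℝ) - j) * ((m.choose (j + 1) : ℕ) : ℝ)⁻¹ := by
    rw [← div_eq_mul_inv, ← div_eq_mul_inv, div_eq_div_iff hc2.ne' hc1.ne']
    push_cast; linarith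
  rw [div_mul_eq_mul_div, le_div_iff₀ hden, ← mul_assoc, hrat, mul_comm ((m : ℝ) - j), mul_assoc,
    mul_assoc]
  apply mul_le_mul_of_nonneg_left _ (by positivity)
  push_cast
  linarith
end

section
/- (Theorem 2, DP-InstaHide guarantee.) Assume the dataset D has ℓ¹ diameter at most 1, and let ε = T·max{A, B}, where A = log(1 − k/n + exp(1/(kσ))·k/n) and B = log(n/(n − k + k·exp(−1/(kσ)))). Then ε ≤ T/(kσ), and the mechanism releasing T independent draws of the mixup-plus-Laplacian-noise procedure satisfies (ε, 0)-differential privacy with respect to removing x₀: for the T-fold product measures μ_D^{⊗T} and μ_{D'}^{⊗T} of the single-draw laws (Lebesgue measure with densities p and q), every measurable W ⊆ (ℝ^d)^T satisfies μ_D^{⊗T}(W) ≤ e^{ε}·μ_{D'}^{⊗T}(W) and μ_{D'}^{⊗T}(W) ≤ e^{ε}·μ_D^{⊗T}(W). -/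
open Finset MeasureTheory

/-- The law of a single draw of the mixup-plus-Laplacian-noise mechanism on `P`:
Lebesgue measure with density `p_P`. -/
noncomputable def mixupLaw (d : ℕ) (σ : ℝ) (k : ℕ) (P : Finset (Fin d → ℝ)) :
    Measure (Fin d → ℝ) :=
  volume.withDensity fun z => ENNReal.ofReal (mixupDensity d σ k P z)

theorem pi_le_aux {T : ℕ} {X : Type*} [MeasurableSpace X] (μ ν : Measure X)
    (c : ENNReal) (hc0 : c ≠ 0) (hct : c ≠ ⊤) (h : ∀ s, μ s ≤ c * ν s)
    (W : Set (Fin T → X)) (hW : MeasurableSet W) :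
    (Measure.pi fun _ : Fin T => μ) W ≤ c ^ T * (Measure.pi fun _ : Fin T => ν) W := by
  have h0 : c ^ T ≠ 0 := pow_ne_zero _ hc0
  have ht : c ^ T ≠ ⊤ := ENNReal.pow_ne_top hct
  have key : ((c ^ T)⁻¹ • (OuterMeasure.pi fun _ : Fin T => μ.toOuterMeasure)) ≤
      OuterMeasure.pi fun _ : Fin T => ν.toOuterMeasure := by
    rw [OuterMeasure.le_pi]
    intro s _
    rw [OuterMeasure.smul_apply, smul_eq_mul, ENNReal.inv_mul_le_iff h0 ht]
    refine (OuterMeasure.pi_pi_le _ _).trans ?_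
    refine (Finset.prod_le_prod' (fun i _ => h (s i))).trans ?_
    rw [Finset.prod_mul_distrib]
    simp
  have := key W
  rw [OuterMeasure.smul_apply, smul_eq_mul, ENNReal.inv_mul_le_iff h0 ht] at this
  rw [Measure.pi, Measure.pi, toMeasure_apply _ _ hW, toMeasure_apply _ _ hW]
  exact this

theorem sum_pairs {α : Type*} [DecidableEq α] (E : Finset α) (m : ℕ)
    (f : Finset α → α → ℝ) :
    ∑ S ∈ E.powersetCard (m + 1), ∑ y ∈ S, f S y =
      ∑ S ∈ E.powersetCard m, ∑ y ∈ E \ S, f (insert y S) y := by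
  rw [Finset.sum_sigma', Finset.sum_sigma']
  refine Finset.sum_bij' (fun p _ => ⟨p.1.erase p.2, p.2⟩) (fun p _ => ⟨insert p.2 p.1, p.2⟩)
    ?_ ?_ ?_ ?_ ?_
  · rintro ⟨S, y⟩ h
    simp only [Finset.mem_sigma, Finset.mem_powersetCard, Finset.mem_sdiff] at h ⊢
    obtain ⟨⟨h1, h2⟩, h3⟩ := h
    refine ⟨⟨(Finset.erase_subset _ _).trans h1, ?_⟩, h1 h3, by simp⟩
    rw [Finset.card_erase_of_mem h3]; omega
  · rintro ⟨S, y⟩ h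
    simp only [Finset.mem_sigma, Finset.mem_powersetCard, Finset.mem_sdiff] at h ⊢
    obtain ⟨⟨h1, h2⟩, h3, h4⟩ := h
    refine ⟨⟨Finset.insert_subset h3 h1, ?_⟩, by simp⟩
    rw [Finset.card_insert_of_notMem h4, h2]
  · rintro ⟨S, y⟩ h
    simp only [Finset.mem_sigma] at h
    simp [Finset.insert_erase h.2]
  · rintro ⟨S, y⟩ h
    simp only [Finset.mem_sigma, Finset.mem_sdiff] at h
    simp [Finset.erase_insert h.2.2]
  · rintro ⟨S, y⟩ h
    simp only [Finset.mem_sigma] at h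
    simp [Finset.insert_erase h.2]

theorem lap_ratio (d : ℕ) (σ : ℝ) (hσ : 0 < σ) (k : ℕ) (hk : 1 ≤ k) (x y z : Fin d → ℝ)
    (S : Finset (Fin d → ℝ)) (hx : x ∉ S) (hy : y ∉ S) (h : ∑ i, |x i - y i| ≤ 1) :
    laplacianDensity d σ (z - (k : ℝ)⁻¹ • ∑ w ∈ insert x S, w) ≤
      Real.exp (1 / (k * σ)) *
        laplacianDensity d σ (z - (k : ℝ)⁻¹ • ∑ w ∈ insert y S, w) := by
  have hk0 : (0 : ℝ) < k := by exact_mod_cast hk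
  rw [Finset.sum_insert hx, Finset.sum_insert hy]
  unfold laplacianDensity
  rw [mul_left_comm, ← Real.exp_add]
  refine mul_le_mul_of_nonneg_left (Real.exp_le_exp.2 ?_) (by positivity)
  have e : 1 / (k * σ) = (k : ℝ)⁻¹ / σ := by field_simp
  rw [e, ← add_div]
  refine div_le_div_of_nonneg_right ?_ hσ.le
  have h2 : (k : ℝ)⁻¹ * ∑ i, |x i - y i| ≤ (k : ℝ)⁻¹ := by
    nlinarith [inv_pos.2 hk0]
  have h3 : ∑ i, |(z - (k : ℝ)⁻¹ • (y + ∑ w ∈ S, w)) i| ≤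
      ∑ i, |(z - (k : ℝ)⁻¹ • (x + ∑ w ∈ S, w)) i| + (k : ℝ)⁻¹ * ∑ i, |x i - y i| := by
    rw [Finset.mul_sum, ← Finset.sum_add_distrib]
    refine Finset.sum_le_sum fun i _ => ?_
    have : (k : ℝ)⁻¹ * |x i - y i| = |(k : ℝ)⁻¹ * (x i - y i)| := by
      rw [abs_mul, abs_of_pos (inv_pos.2 hk0)]
    rw [this]
    refine le_trans (le_of_eq ?_) (abs_add_le _ _)
    congr 1
    simp only [Pi.sub_apply, Pi.smul_apply, Pi.add_apply, smul_eq_mul]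
    ring
  linarith

theorem lap_nonneg (d : ℕ) (σ : ℝ) (hσ : 0 < σ) (x : Fin d → ℝ) :
    0 ≤ laplacianDensity d σ x := by
  unfold laplacianDensity; positivity

theorem law_le (d : ℕ) (σ : ℝ) (k : ℕ) (P P' : Finset (Fin d → ℝ)) (c : ℝ) (hc : 0 ≤ c)
    (h : ∀ z, mixupDensity d σ k P z ≤ c * mixupDensity d σ k P' z) (s : Set (Fin d → ℝ)) :
    mixupLaw d σ k P s ≤ ENNReal.ofReal c * mixupLaw d σ k P' s := by
  have : mixupLaw d σ k P ≤ ENNReal.ofReal c • mixupLaw d σ k P' := by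
    unfold mixupLaw
    rw [← withDensity_smul' _ _ ENNReal.ofReal_ne_top]
    refine withDensity_mono (Filter.Eventually.of_forall fun z => ?_)
    simp only [Pi.smul_apply, smul_eq_mul]
    rw [← ENNReal.ofReal_mul hc]
    exact ENNReal.ofReal_le_ofReal (h z)
  exact this s

theorem density_bounds (d : ℕ) (σ : ℝ) (hσ : 0 < σ)
    (D : Finset (Fin d → ℝ)) (n : ℕ) (hn : D.card = n)
    (hdiam : ∀ x ∈ D, ∀ y ∈ D, ∑ i, |x i - y i| ≤ 1)
    (x₀ : Fin d → ℝ) (hx₀ : x₀ ∈ D)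
    (k : ℕ) (hk1 : 1 ≤ k) (hkn : k ≤ n - 1) (z : Fin d → ℝ) :
    mixupDensity d σ k D z ≤ (1 - (k : ℝ) / n + Real.exp (1 / (k * σ)) * ((k : ℝ) / n)) *
      mixupDensity d σ k (D.erase x₀) z ∧
    mixupDensity d σ k (D.erase x₀) z ≤
      ((n : ℝ) / ((n : ℝ) - k + k * Real.exp (-(1 / (k * σ))))) * mixupDensity d σ k D z := by
  classical
  obtain ⟨m, rfl⟩ : ∃ m, k = m + 1 := ⟨k - 1, by omega⟩
  obtain ⟨N, rfl⟩ : ∃ N, n = N + 1 := ⟨n - 1, by omega⟩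
  have hmN : m + 1 ≤ N := by omega
  set E := D.erase x₀ with hE
  have hEx : x₀ ∉ E := Finset.notMem_erase _ _
  have hEc : E.card = N := by rw [hE, Finset.card_erase_of_mem hx₀, hn]; rfl
  have hDE : D = insert x₀ E := (Finset.insert_erase hx₀).symm
  have hED : ∀ y ∈ E, y ∈ D := fun y hy => Finset.mem_of_mem_erase hy
  set c := Real.exp (1 / (((m + 1 : ℕ) : ℝ) * σ)) with hc
  have hc0 : 0 < c := Real.exp_pos _
  set F : Finset (Fin d → ℝ) → ℝ := fun S =>
    laplacianDensity d σ (z - ((m + 1 : ℕ) : ℝ)⁻¹ • ∑ x ∈ S, x) with hF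
  set Q := ∑ S ∈ E.powersetCard (m + 1), F S with hQ
  set R := ∑ S ∈ E.powersetCard m, F (insert x₀ S) with hR
  have hQ0 : 0 ≤ Q := Finset.sum_nonneg fun S _ => lap_nonneg d σ hσ _
  have hR0 : 0 ≤ R := Finset.sum_nonneg fun S _ => lap_nonneg d σ hσ _
  have hsum : ∑ S ∈ D.powersetCard (m + 1), F S = Q + R := by
    rw [hDE, Finset.powersetCard_succ_insert hEx, Finset.sum_union, Finset.sum_image]
    · intro S hS S' hS' h
      have h1 : x₀ ∉ S := fun h => hEx ((Finset.mem_powersetCard.1 hS).1 h)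
      have h2 : x₀ ∉ S' := fun h => hEx ((Finset.mem_powersetCard.1 hS').1 h)
      rw [← Finset.erase_insert h1, ← Finset.erase_insert h2, h]
    · rw [Finset.disjoint_left]
      intro S hS hS'
      obtain ⟨S', _, rfl⟩ := Finset.mem_image.1 hS'
      exact hEx ((Finset.mem_powersetCard.1 hS).1 (Finset.mem_insert_self _ _))
  have hQ2 : ((m : ℝ) + 1) * Q = ∑ S ∈ E.powersetCard m, ∑ y ∈ E \ S, F (insert y S) := by
    rw [← sum_pairs E m (fun S _ => F S), hQ, Finset.mul_sum]
    refine Finset.sum_congr rfl fun S hS => ?_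
    rw [Finset.sum_const, (Finset.mem_powersetCard.1 hS).2]; simp
  have hR2 : ((N : ℝ) - m) * R = ∑ S ∈ E.powersetCard m, ∑ y ∈ E \ S, F (insert x₀ S) := by
    rw [hR, Finset.mul_sum]
    refine Finset.sum_congr rfl fun S hS => ?_
    rw [Finset.sum_const, Finset.card_sdiff_of_subset (Finset.mem_powersetCard.1 hS).1,
      (Finset.mem_powersetCard.1 hS).2, hEc, nsmul_eq_mul, Nat.cast_sub (by omega)]
  have b1 : ((N : ℝ) - m) * R ≤ c * (((m : ℝ) + 1) * Q) := by
    rw [hR2, hQ2, Finset.mul_sum]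
    refine Finset.sum_le_sum fun S hS => ?_
    rw [Finset.mul_sum]
    refine Finset.sum_le_sum fun y hy => ?_
    obtain ⟨hyE, hyS⟩ := Finset.mem_sdiff.1 hy
    exact lap_ratio d σ hσ (m + 1) hk1 x₀ y z S
      (fun h => hEx ((Finset.mem_powersetCard.1 hS).1 h)) hyS (hdiam _ hx₀ _ (hED y hyE))
  have b2 : ((m : ℝ) + 1) * Q ≤ c * (((N : ℝ) - m) * R) := by
    rw [hR2, hQ2, Finset.mul_sum]
    refine Finset.sum_le_sum fun S hS => ?_
    rw [Finset.mul_sum]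
    refine Finset.sum_le_sum fun y hy => ?_
    obtain ⟨hyE, hyS⟩ := Finset.mem_sdiff.1 hy
    exact lap_ratio d σ hσ (m + 1) hk1 y x₀ z S hyS
      (fun h => hEx ((Finset.mem_powersetCard.1 hS).1 h)) (hdiam _ (hED y hyE) _ hx₀)
  have hp : mixupDensity d σ (m + 1) D z = (((N + 1).choose (m + 1) : ℕ) : ℝ)⁻¹ * (Q + R) := by
    unfold mixupDensity; rw [hn]; rw [← hsum]
  have hq : mixupDensity d σ (m + 1) E z = ((N.choose (m + 1) : ℕ) : ℝ)⁻¹ * Q := by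
    unfold mixupDensity; rw [hEc]
  have hch : ((N.choose (m + 1) : ℕ) : ℝ) * (N + 1) =
      (((N + 1).choose (m + 1) : ℕ) : ℝ) * (N - m) := by
    have := Nat.choose_mul_succ_eq N (m + 1)
    have h2 : N + 1 - (m + 1) = N - m := by omega
    rw [h2] at this
    have h3 : ((N - m : ℕ) : ℝ) = N - m := Nat.cast_sub (by omega)
    rw [← h3]
    exact_mod_cast this
  have hNm : (0 : ℝ) < N - m := by
    have : ((m + 1 : ℕ) : ℝ) ≤ N := by exact_mod_cast hmN
    push_cast at this; linarith
  have hC : (0 : ℝ) < ((N.choose (m + 1) : ℕ) : ℝ) := by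
    exact_mod_cast Nat.choose_pos hmN
  have hC' : (0 : ℝ) < (((N + 1).choose (m + 1) : ℕ) : ℝ) := by
    exact_mod_cast Nat.choose_pos (by omega)
  have hinv : (((N + 1).choose (m + 1) : ℕ) : ℝ)⁻¹ =
      ((N.choose (m + 1) : ℕ) : ℝ)⁻¹ * ((N - m) / (N + 1)) := by
    field_simp
    linarith
  rw [hp, hq, hinv, Real.exp_neg, ← hc]
  have hCi := inv_pos.2 hC
  generalize ((N.choose (m + 1) : ℕ) : ℝ)⁻¹ = C at *
  have hN0 : (0 : ℝ) < N + 1 := by positivity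
  have hm0 : (0 : ℝ) < m + 1 := by positivity
  push_cast
  have e1 : (N : ℝ) + 1 - (m + 1) = N - m := by ring
  constructor
  · have : (1 - ((m : ℝ) + 1) / (N + 1) + c * ((m + 1) / (N + 1))) * (C * Q) =
      C * (((N - m) * Q + c * ((m + 1) * Q)) / (N + 1)) := by
      field_simp; ring
    rw [this]
    have : C * ((N - m) / (N + 1)) * (Q + R) = C * (((N - m) * Q + (N - m) * R) / (N + 1)) := by
      field_simp
    rw [this]
    gcongr
  · rw [e1]
    have hden : (0 : ℝ) < N - m + (m + 1) * c⁻¹ := by positivity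
    have : ((N : ℝ) + 1) / (N - m + (m + 1) * c⁻¹) * (C * ((N - m) / (N + 1)) * (Q + R)) =
      C * (((N - m) * Q + (N - m) * R) / (N - m + (m + 1) * c⁻¹)) := by
      generalize (N : ℝ) - m + (m + 1) * c⁻¹ = X at hden ⊢
      field_simp
    rw [this]
    refine mul_le_mul_of_nonneg_left ?_ hCi.le
    rw [le_div_iff₀ hden]
    have : c⁻¹ * (((m : ℝ) + 1) * Q) ≤ (N - m) * R := by
      rw [inv_mul_le_iff₀ hc0]; exact b2
    linarith

/-- Theorem 2 (DP-InstaHide guarantee): with `ε = T·max{A,B}` where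
`A = log(1 − k/n + exp(1/(kσ))·k/n)` and `B = log(n/(n − k + k·exp(−1/(kσ))))`,
we have `ε ≤ T/(kσ)`, and the mechanism releasing T independent draws of the
mixup-plus-Laplacian-noise procedure satisfies (ε, 0)-differential privacy with
respect to removing `x₀`. -/
theorem dp_instahide_guarantee
    (d : ℕ) (hd : 1 ≤ d) (σ : ℝ) (hσ : 0 < σ) (T : ℕ) (hT : 1 ≤ T)
    (D : Finset (Fin d → ℝ)) (n : ℕ) (hn : D.card = n)
    (hdiam : ∀ x ∈ D, ∀ y ∈ D, ∑ i, |x i - y i| ≤ 1)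
    (x₀ : Fin d → ℝ) (hx₀ : x₀ ∈ D)
    (k : ℕ) (hk1 : 1 ≤ k) (hkn : k ≤ n - 1)
    (A B ε : ℝ)
    (hA : A = Real.log (1 - (k : ℝ) / n + Real.exp (1 / (k * σ)) * ((k : ℝ) / n)))
    (hB : B = Real.log ((n : ℝ) / ((n : ℝ) - k + k * Real.exp (-(1 / (k * σ))))))
    (hε : ε = T * max A B) :
    ε ≤ T / (k * σ) ∧
    ∀ W : Set (Fin T → (Fin d → ℝ)), MeasurableSet W →
      (Measure.pi fun _ : Fin T => mixupLaw d σ k D) W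
          ≤ ENNReal.ofReal (Real.exp ε) *
              (Measure.pi fun _ : Fin T => mixupLaw d σ k (D.erase x₀)) W ∧
      (Measure.pi fun _ : Fin T => mixupLaw d σ k (D.erase x₀)) W
          ≤ ENNReal.ofReal (Real.exp ε) *
              (Measure.pi fun _ : Fin T => mixupLaw d σ k D) W := by
  have hn2 : k + 1 ≤ n := by omega
  have hk0 : (0 : ℝ) < k := by exact_mod_cast hk1
  have hnk : (0 : ℝ) < n - k := by
    have : ((k + 1 : ℕ) : ℝ) ≤ n := by exact_mod_cast hn2
    push_cast at this; linarith
  have hn0 : (0 : ℝ) < n := by linarith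
  have ht : 0 < 1 / ((k : ℝ) * σ) := by positivity
  have hdens := density_bounds d σ hσ D n hn hdiam x₀ hx₀ k hk1 hkn
  have hkn1 : (k : ℝ) / n < 1 := by rw [div_lt_one hn0]; linarith
  have hkn0 : 0 < (k : ℝ) / n := by positivity
  set t := 1 / ((k : ℝ) * σ) with htdef
  have he1 : 1 ≤ Real.exp t := Real.one_le_exp ht.le
  have hep := Real.exp_pos t
  have hapos : 0 < 1 - (k : ℝ) / n + Real.exp t * ((k : ℝ) / n) := by
    have := mul_pos hep hkn0; linarith
  have hden : 0 < (n : ℝ) - k + k * Real.exp (-t) := by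
    have := mul_pos hk0 (Real.exp_pos (-t)); linarith
  have hbpos : 0 < (n : ℝ) / ((n : ℝ) - k + k * Real.exp (-t)) := div_pos hn0 hden
  have hAe : Real.exp A = 1 - (k : ℝ) / n + Real.exp t * ((k : ℝ) / n) := by
    rw [hA, Real.exp_log hapos]
  have hBe : Real.exp B = (n : ℝ) / ((n : ℝ) - k + k * Real.exp (-t)) := by
    rw [hB, Real.exp_log hbpos]
  have hAt : A ≤ t := by
    rw [← Real.exp_le_exp, hAe]; nlinarith
  have hBt : B ≤ t := by
    rw [← Real.exp_le_exp, hBe, div_le_iff₀ hden]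
    have : Real.exp t * Real.exp (-t) = 1 := by rw [← Real.exp_add]; simp
    have h2 : Real.exp t * (n - k + k * Real.exp (-t)) = Real.exp t * (n - k) + k := by
      linear_combination (k : ℝ) * this
    rw [h2]; nlinarith
  refine ⟨?_, ?_⟩
  · rw [hε]
    have : (T : ℝ) / (k * σ) = T * t := by rw [htdef]; ring
    rw [this]
    exact mul_le_mul_of_nonneg_left (max_le hAt hBt) (Nat.cast_nonneg T)
  · intro W hW
    have hexp : ENNReal.ofReal (Real.exp ε) = ENNReal.ofReal (Real.exp (max A B)) ^ T := by
      rw [hε, Real.exp_nat_mul, ENNReal.ofReal_pow (Real.exp_pos _).le]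
    have hnn : ∀ P z, 0 ≤ mixupDensity d σ k P z := fun P z =>
      mul_nonneg (by positivity) (Finset.sum_nonneg fun S _ => lap_nonneg d σ hσ _)
    have hc0 : ENNReal.ofReal (Real.exp (max A B)) ≠ 0 := by
      simpa using Real.exp_pos (max A B)
    rw [hexp]
    constructor
    · refine pi_le_aux _ _ _ hc0 ENNReal.ofReal_ne_top
        (law_le d σ k _ _ _ (Real.exp_pos _).le fun z => ?_) W hW
      refine (hdens z).1.trans (mul_le_mul_of_nonneg_right ?_ (hnn _ _))
      rw [← hAe]; exact Real.exp_le_exp.2 (le_max_left _ _)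
    · refine pi_le_aux _ _ _ hc0 ENNReal.ofReal_ne_top
        (law_le d σ k _ _ _ (Real.exp_pos _).le fun z => ?_) W hW
      refine (hdens z).2.trans (mul_le_mul_of_nonneg_right ?_ (hnn _ _))
      rw [← hBe]; exact Real.exp_le_exp.2 (le_max_right _ _)
end

section
/- (Group privacy.) Let μ₀, μ₁, …, μ_l be probability measures on a measurable space Ω, let ε > 0 and δ ≥ 0, and suppose that for each i < l and every measurable U ⊆ Ω, μ_i(U) ≤ e^ε·μ_{i+1}(U) + δ and μ_{i+1}(U) ≤ e^ε·μ_i(U) + δ. Then for every measurable U ⊆ Ω, μ₀(U) ≤ e^{lε}·μ_l(U) + δ·(e^{lε} − 1)/(e^ε − 1) and μ_l(U) ≤ e^{lε}·μ₀(U) + δ·(e^{lε} − 1)/(e^ε − 1). -/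
open MeasureTheory

theorem group_privacy_chain (ε δ : ℝ) (hε : 0 < ε) (hδ : 0 ≤ δ) (a : ℕ → ENNReal) (l : ℕ)
    (h : ∀ i < l, a (i + 1) ≤ ENNReal.ofReal (Real.exp ε) * a i + ENNReal.ofReal δ) :
    a l ≤ ENNReal.ofReal (Real.exp (l * ε)) * a 0 +
      ENNReal.ofReal (δ * (Real.exp (l * ε) - 1) / (Real.exp ε - 1)) := by
  have hE : 0 < Real.exp ε - 1 := by
    have := Real.one_lt_exp_iff.2 hε
    linarith
  induction l with
  | zero => simp
  | succ n ih =>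
    have ih' := ih (fun i hi => h i (by omega))
    have hn : 0 ≤ Real.exp (n * ε) - 1 := by
      have := Real.one_le_exp (x := n * ε) (by positivity)
      linarith
    have hD : 0 ≤ δ * (Real.exp (n * ε) - 1) / (Real.exp ε - 1) := by positivity
    have e1 : Real.exp ((n + 1 : ℕ) * ε) = Real.exp ε * Real.exp (n * ε) := by
      rw [← Real.exp_add]
      congr 1
      push_cast
      ring
    have e2 : δ * (Real.exp ((n + 1 : ℕ) * ε) - 1) / (Real.exp ε - 1)
        = Real.exp ε * (δ * (Real.exp (n * ε) - 1) / (Real.exp ε - 1)) + δ := by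
      rw [e1]
      field_simp
      ring
    rw [e2, e1, ENNReal.ofReal_add (by positivity) hδ, ENNReal.ofReal_mul (by positivity),
      ENNReal.ofReal_mul (by positivity)]
    refine (h n (by omega)).trans ?_
    rw [← add_assoc, mul_assoc, ← mul_add]
    gcongr

/-- Group privacy: if consecutive measures in a chain `μ₀, …, μ_l` satisfy two-sided
(ε, δ)-differential privacy, then the endpoints satisfy
(lε, δ·(e^{lε} − 1)/(e^ε − 1))-differential privacy, in both directions. -/
theorem group_privacy
    {Ω : Type*} [MeasurableSpace Ω]
    (l : ℕ) (hl : 1 ≤ l)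
    (μ : ℕ → Measure Ω) (hprob : ∀ i ≤ l, IsProbabilityMeasure (μ i))
    (ε δ : ℝ) (hε : 0 < ε) (hδ : 0 ≤ δ)
    (h₁ : ∀ i < l, ∀ U : Set Ω, MeasurableSet U →
      μ i U ≤ ENNReal.ofReal (Real.exp ε) * μ (i + 1) U + ENNReal.ofReal δ)
    (h₂ : ∀ i < l, ∀ U : Set Ω, MeasurableSet U →
      μ (i + 1) U ≤ ENNReal.ofReal (Real.exp ε) * μ i U + ENNReal.ofReal δ)
    (U : Set Ω) (hU : MeasurableSet U) :
    μ 0 U ≤ ENNReal.ofReal (Real.exp (l * ε)) * μ l U +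
        ENNReal.ofReal (δ * (Real.exp (l * ε) - 1) / (Real.exp ε - 1)) ∧
    μ l U ≤ ENNReal.ofReal (Real.exp (l * ε)) * μ 0 U +
        ENNReal.ofReal (δ * (Real.exp (l * ε) - 1) / (Real.exp ε - 1)) := by
  constructor
  · have := group_privacy_chain ε δ hε hδ (fun i => μ (l - i) U) l (fun i hi => by
      have := h₁ (l - (i + 1)) (by omega) U hU
      rwa [show l - (i + 1) + 1 = l - i by omega] at this)
    simpa using this
  · exact group_privacy_chain ε δ hε hδ (fun i => μ i U) l (fun i hi => h₂ i hi U hU)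
end

section
/- Let μ and ν be probability measures on a measurable space Ω, let ε, δ ≥ 0, and suppose μ(U) ≤ e^ε · ν(U) + δ for every measurable U ⊆ Ω. Then for every measurable C : Ω → ℝ with 0 ≤ C ≤ B, the attack cost under ν is bounded below: ∫ C dν ≥ e^{−ε}·(∫ C dμ − B·δ). -/
open MeasureTheory

/-- If `μ(U) ≤ e^ε·ν(U) + δ` for every measurable `U`, then for every measurable
`C : Ω → ℝ` with `0 ≤ C ≤ B`, the attack cost under `ν` is bounded below:
`∫ C dν ≥ e^{−ε}·(∫ C dμ − B·δ)`. -/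
theorem dp_attack_cost_lower_bound
    {Ω : Type*} [MeasurableSpace Ω]
    (μ ν : Measure Ω) [IsProbabilityMeasure μ] [IsProbabilityMeasure ν]
    (ε δ : ℝ) (hε : 0 ≤ ε) (hδ : 0 ≤ δ)
    (h : ∀ U : Set Ω, MeasurableSet U →
      μ U ≤ ENNReal.ofReal (Real.exp ε) * ν U + ENNReal.ofReal δ)
    (B : ℝ) (hB : 0 ≤ B)
    (C : Ω → ℝ) (hC : Measurable C) (hC0 : ∀ ω, 0 ≤ C ω) (hCB : ∀ ω, C ω ≤ B) :
    Real.exp (-ε) * ((∫ ω, C ω ∂μ) - B * δ) ≤ ∫ ω, C ω ∂ν := by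
  have hint : ∀ (ρ : Measure Ω) [IsProbabilityMeasure ρ], Integrable C ρ := by
    intro ρ _
    refine Integrable.of_bound hC.aestronglyMeasurable B (Filter.Eventually.of_forall fun ω => ?_)
    rw [Real.norm_eq_abs, abs_of_nonneg (hC0 ω)]
    exact hCB ω
  have hlc : ∀ (ρ : Measure Ω) [IsProbabilityMeasure ρ],
      ∫ ω, C ω ∂ρ = ∫ t in Set.Ioc 0 B, ρ.real {a : Ω | t ≤ C a} := by
    intro ρ _
    exact (hint ρ).integral_eq_integral_Ioc_meas_le (Filter.Eventually.of_forall hC0)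
      (Filter.Eventually.of_forall hCB)
  have htail : ∀ (ρ : Measure Ω) [IsProbabilityMeasure ρ],
      IntegrableOn (fun t : ℝ => ρ.real {a : Ω | t ≤ C a}) (Set.Ioc 0 B) := by
    intro ρ _
    have hanti : Antitone (fun t : ℝ => ρ.real {a : Ω | t ≤ C a}) := by
      intro s t hst
      exact measureReal_mono (fun a (ha : t ≤ C a) => le_trans hst ha)
    refine Integrable.of_bound hanti.measurable.aestronglyMeasurable 1
      (Filter.Eventually.of_forall fun t => ?_)
    rw [Real.norm_eq_abs, abs_of_nonneg measureReal_nonneg]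
    exact measureReal_le_one
  have hreal : ∀ t : ℝ, μ.real {a : Ω | t ≤ C a} ≤
      Real.exp ε * ν.real {a : Ω | t ≤ C a} + δ := by
    intro t
    have h1 := h {a : Ω | t ≤ C a} (measurableSet_le measurable_const hC)
    have hfin : ENNReal.ofReal (Real.exp ε) * ν {a : Ω | t ≤ C a} ≠ ⊤ :=
      ENNReal.mul_ne_top ENNReal.ofReal_ne_top (measure_ne_top _ _)
    have h2 := ENNReal.toReal_mono (ENNReal.add_ne_top.2 ⟨hfin, ENNReal.ofReal_ne_top⟩) h1
    rwa [ENNReal.toReal_add hfin ENNReal.ofReal_ne_top, ENNReal.toReal_mul,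
      ENNReal.toReal_ofReal (Real.exp_pos ε).le, ENNReal.toReal_ofReal hδ] at h2
  have hconst : IntegrableOn (fun _ : ℝ => δ) (Set.Ioc 0 B) :=
    integrableOn_const (by simp)
  have hmain : ∫ ω, C ω ∂μ ≤ Real.exp ε * ∫ ω, C ω ∂ν + B * δ := by
    rw [hlc μ, hlc ν]
    calc _ ≤ ∫ t in Set.Ioc 0 B, (Real.exp ε * ν.real {a : Ω | t ≤ C a} + δ) :=
          integral_mono (htail μ) (((htail ν).const_mul _).add hconst) hreal
      _ = _ := by
          rw [integral_add ((htail ν).const_mul _) hconst, integral_const_mul]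
          simp [hB]
  calc _ ≤ Real.exp (-ε) * (Real.exp ε * ∫ ω, C ω ∂ν) :=
        mul_le_mul_of_nonneg_left (by linarith) (Real.exp_pos _).le
    _ = _ := by rw [← mul_assoc, ← Real.exp_add]; simp
end

section
/- (Theorem 1, nonnegative cost.) Let μ₀, μ₁, …, μ_l be probability measures on a measurable space Ω, let ε > 0 and δ ≥ 0, and suppose that for each i < l and every measurable U ⊆ Ω, μ_i(U) ≤ e^ε·μ_{i+1}(U) + δ and μ_{i+1}(U) ≤ e^ε·μ_i(U) + δ. Let C : Ω → ℝ be measurable with 0 ≤ C ≤ B, and write J(μ) = ∫ C dμ. Then the cost after l poisoning modifications satisfies J(μ_l) ≥ max{ e^{−lε}·( J(μ₀) + B·δ/(e^ε − 1) ) − B·δ/(e^ε − 1), 0 }. -/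
open MeasureTheory

lemma poisoning_step {Ω : Type*} [MeasurableSpace Ω] (μ ν : Measure Ω)
    [IsProbabilityMeasure μ] [IsProbabilityMeasure ν] (E δ : ℝ) (hE : 0 ≤ E) (hδ : 0 ≤ δ)
    (h : ∀ U : Set Ω, MeasurableSet U → μ U ≤ ENNReal.ofReal E * ν U + ENNReal.ofReal δ)
    (B : ℝ) (hB : 0 ≤ B)
    (C : Ω → ℝ) (hC : Measurable C) (hC0 : ∀ ω, 0 ≤ C ω) (hCB : ∀ ω, C ω ≤ B) :
    ∫ ω, C ω ∂μ ≤ E * ∫ ω, C ω ∂ν + B * δ := by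
  have hint : ∀ (ρ : Measure Ω) [IsProbabilityMeasure ρ], Integrable C ρ := by
    intro ρ _
    refine Integrable.of_bound hC.aestronglyMeasurable B (Filter.Eventually.of_forall fun ω => ?_)
    rw [Real.norm_of_nonneg (hC0 ω)]
    exact hCB ω
  have hlay : ∀ (ρ : Measure Ω) [IsProbabilityMeasure ρ],
      ∫ ω, C ω ∂ρ = ∫ t in Set.Ioc 0 B, ρ.real {a | t ≤ C a} := by
    intro ρ _
    exact (hint ρ).integral_eq_integral_Ioc_meas_le (Filter.Eventually.of_forall hC0)
      (Filter.Eventually.of_forall hCB)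
  have hI : ∀ (ρ : Measure Ω) [IsProbabilityMeasure ρ],
      IntegrableOn (fun t : ℝ => ρ.real {a | t ≤ C a}) (Set.Ioc 0 B) := by
    intro ρ _
    have hanti : Antitone (fun t : ℝ => ρ.real {a | t ≤ C a}) := by
      intro s t hst
      exact measureReal_mono (fun a (ha : t ≤ C a) => hst.trans ha)
    refine Integrable.of_bound hanti.measurable.aestronglyMeasurable 1
      (Filter.Eventually.of_forall fun t => ?_)
    rw [Real.norm_of_nonneg measureReal_nonneg]
    exact measureReal_le_one
  have hconst : IntegrableOn (fun _ : ℝ => δ) (Set.Ioc 0 B) := integrable_const δ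
  have hrhs : E * ∫ ω, C ω ∂ν + B * δ
      = ∫ t in Set.Ioc 0 B, (E * ν.real {a | t ≤ C a} + δ) := by
    rw [integral_add ((hI ν).const_mul E) hconst, integral_const_mul, ← hlay ν]
    simp [hB]
  rw [hrhs, hlay μ]
  refine integral_mono (hI μ) (((hI ν).const_mul E).add hconst) fun t => ?_
  have hm := h {a | t ≤ C a} (measurableSet_le measurable_const hC)
  have hfin : ENNReal.ofReal E * ν {a | t ≤ C a} ≠ ⊤ :=
    ENNReal.mul_ne_top ENNReal.ofReal_ne_top (measure_ne_top _ _)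
  have hm2 := ENNReal.toReal_mono (ENNReal.add_ne_top.2 ⟨hfin, ENNReal.ofReal_ne_top⟩) hm
  rw [ENNReal.toReal_add hfin ENNReal.ofReal_ne_top, ENNReal.toReal_mul,
    ENNReal.toReal_ofReal hE, ENNReal.toReal_ofReal hδ] at hm2
  exact hm2


/-- Theorem 1 (nonnegative cost): for a chain `μ₀, …, μ_l` of probability measures in
which consecutive pairs satisfy two-sided (ε, δ)-differential privacy, and a measurable
cost `0 ≤ C ≤ B` with expected cost `J(μ) = ∫ C dμ`, the cost after `l` poisoning
modifications satisfies
`J(μ_l) ≥ max{ e^{−lε}·(J(μ₀) + B·δ/(e^ε − 1)) − B·δ/(e^ε − 1), 0 }`. -/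
theorem poisoning_cost_lower_bound_nonneg
    {Ω : Type*} [MeasurableSpace Ω]
    (l : ℕ) (hl : 1 ≤ l)
    (μ : ℕ → Measure Ω) (hprob : ∀ i ≤ l, IsProbabilityMeasure (μ i))
    (ε δ : ℝ) (hε : 0 < ε) (hδ : 0 ≤ δ)
    (h₁ : ∀ i < l, ∀ U : Set Ω, MeasurableSet U →
      μ i U ≤ ENNReal.ofReal (Real.exp ε) * μ (i + 1) U + ENNReal.ofReal δ)
    (h₂ : ∀ i < l, ∀ U : Set Ω, MeasurableSet U →
      μ (i + 1) U ≤ ENNReal.ofReal (Real.exp ε) * μ i U + ENNReal.ofReal δ)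
    (B : ℝ) (hB : 0 ≤ B)
    (C : Ω → ℝ) (hC : Measurable C) (hC0 : ∀ ω, 0 ≤ C ω) (hCB : ∀ ω, C ω ≤ B) :
    max (Real.exp (-(l * ε)) * ((∫ ω, C ω ∂(μ 0)) + B * δ / (Real.exp ε - 1))
          - B * δ / (Real.exp ε - 1)) 0
      ≤ ∫ ω, C ω ∂(μ l) := by
  refine max_le ?_ (integral_nonneg hC0)
  have hE : 0 < Real.exp ε - 1 := by
    have := Real.add_one_lt_exp hε.ne'
    linarith
  set K := B * δ / (Real.exp ε - 1) with hK
  have hKE : B * δ = K * (Real.exp ε - 1) := by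
    rw [hK]
    field_simp
  have key : ∀ k ≤ l, Real.exp (-(k * ε)) * ((∫ ω, C ω ∂(μ 0)) + K) ≤ (∫ ω, C ω ∂(μ k)) + K := by
    intro k
    induction k with
    | zero => intro _; simp
    | succ k ih =>
      intro hk
      have ih' := ih (by omega)
      haveI := hprob k (by omega)
      haveI := hprob (k + 1) hk
      have hs := poisoning_step (μ k) (μ (k + 1)) (Real.exp ε) δ (Real.exp_pos ε).le hδ
        (h₁ k (by omega)) B hB C hC hC0 hCB
      have hexp : Real.exp (-(k * ε)) = Real.exp ε * Real.exp (-(((k + 1 : ℕ) : ℝ) * ε)) := by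
        rw [← Real.exp_add]
        congr 1
        push_cast
        ring
      rw [hexp] at ih'
      refine le_of_mul_le_mul_left ?_ (Real.exp_pos ε)
      linarith
  linarith [key l le_rfl]
end

section
/- Assume the dataset D has ℓ¹ diameter at most 1. For any k-element subset S of D' = D \ {x₀} and any y ∈ S, replacing y by x₀ in the mixup average changes the Laplacian density by at most a factor exp(‖x₀ − y‖₁/(kσ)): for every z ∈ ℝ^d, exp(−‖x₀ − y‖₁/(kσ)) · φ_σ(z − (1/k)Σ_{x∈S} x) ≤ φ_σ(z − (1/k)(x₀ + Σ_{x ∈ S \ {y}} x)) ≤ exp(‖x₀ − y‖₁/(kσ)) · φ_σ(z − (1/k)Σ_{x∈S} x), and in particular both ratios are bounded by exp(1/(kσ)). -/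
open Finset

theorem laplacianDensity_le_aux (d : ℕ) (σ : ℝ) (hσ : 0 < σ) (u v : Fin d → ℝ) (r : ℝ)
    (h : ∑ i, |u i - v i| ≤ r * σ) :
    laplacianDensity d σ u ≤ Real.exp r * laplacianDensity d σ v := by
  unfold laplacianDensity
  have h1 : ∑ i, |v i| ≤ ∑ i, |u i - v i| + ∑ i, |u i| := by
    rw [← Finset.sum_add_distrib]
    refine Finset.sum_le_sum fun i _ => ?_
    have h2 := abs_sub_abs_le_abs_sub (v i) (u i)
    rw [abs_sub_comm] at h2
    linarith
  have e : Real.exp r * (((2 * σ) ^ d)⁻¹ * Real.exp (-(∑ i, |v i|) / σ))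
      = ((2 * σ) ^ d)⁻¹ * Real.exp (r + -(∑ i, |v i|) / σ) := by
    rw [Real.exp_add]; ring
  rw [e]
  refine mul_le_mul_of_nonneg_left (Real.exp_le_exp.mpr ?_) (by positivity)
  have e2 : r + -(∑ i, |v i|) / σ = (r * σ - ∑ i, |v i|) / σ := by
    field_simp
    ring
  rw [e2]
  exact div_le_div_of_nonneg_right (by linarith) hσ.le

/-- If `D` has ℓ¹ diameter at most 1, then for any k-element subset `S` of
`D' = D \ {x₀}` and any `y ∈ S`, replacing `y` by `x₀` in the mixup average changes
the Laplacian density by at most a factor `exp(‖x₀ − y‖₁/(kσ))`, and in particular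
both ratios are bounded by `exp(1/(kσ))`. -/
theorem laplacian_density_swap_bound
    (d : ℕ) (hd : 1 ≤ d) (σ : ℝ) (hσ : 0 < σ)
    (D : Finset (Fin d → ℝ)) (n : ℕ) (hn : D.card = n)
    (hdiam : ∀ x ∈ D, ∀ y ∈ D, ∑ i, |x i - y i| ≤ 1)
    (x₀ : Fin d → ℝ) (hx₀ : x₀ ∈ D)
    (k : ℕ) (hk1 : 1 ≤ k) (hkn : k ≤ n - 1)
    (S : Finset (Fin d → ℝ)) (hS : S ∈ (D.erase x₀).powersetCard k)
    (y : Fin d → ℝ) (hy : y ∈ S)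
    (z : Fin d → ℝ) :
    Real.exp (-(∑ i, |x₀ i - y i|) / (k * σ)) *
          laplacianDensity d σ (z - (k : ℝ)⁻¹ • ∑ x ∈ S, x)
        ≤ laplacianDensity d σ (z - (k : ℝ)⁻¹ • (x₀ + ∑ x ∈ S.erase y, x)) ∧
    laplacianDensity d σ (z - (k : ℝ)⁻¹ • (x₀ + ∑ x ∈ S.erase y, x))
        ≤ Real.exp ((∑ i, |x₀ i - y i|) / (k * σ)) *
            laplacianDensity d σ (z - (k : ℝ)⁻¹ • ∑ x ∈ S, x) ∧
    Real.exp ((∑ i, |x₀ i - y i|) / (k * σ)) ≤ Real.exp (1 / (k * σ)) := by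
  have hk : (0 : ℝ) < k := by exact_mod_cast hk1
  have hyD : y ∈ D := Finset.mem_of_mem_erase ((Finset.mem_powersetCard.mp hS).1 hy)
  have hsum : ∑ x ∈ S, x = y + ∑ x ∈ S.erase y, x := (Finset.add_sum_erase S (fun x => x) hy).symm
  rw [hsum]
  generalize ∑ x ∈ S.erase y, x = w
  have hd1 : ∑ i, |(z - (k : ℝ)⁻¹ • (y + w)) i - (z - (k : ℝ)⁻¹ • (x₀ + w)) i|
      = (∑ i, |x₀ i - y i|) / (k * σ) * σ := by
    have e : (∑ i, |x₀ i - y i|) / (k * σ) * σ = (k : ℝ)⁻¹ * ∑ i, |x₀ i - y i| := by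
      field_simp
    rw [e, Finset.mul_sum]
    refine Finset.sum_congr rfl fun i _ => ?_
    rw [← abs_of_pos (inv_pos.mpr hk), ← abs_mul, abs_of_pos (inv_pos.mpr hk)]
    congr 1
    simp only [Pi.sub_apply, Pi.smul_apply, Pi.add_apply, smul_eq_mul]
    ring
  refine ⟨?_, ?_, ?_⟩
  · have h := laplacianDensity_le_aux d σ hσ _ _ _ hd1.le
    rw [neg_div, Real.exp_neg]
    exact (inv_mul_le_iff₀ (Real.exp_pos _)).mpr h
  · refine laplacianDensity_le_aux d σ hσ _ _ _ ?_
    rw [← hd1]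
    exact (Finset.sum_congr rfl fun i _ => abs_sub_comm _ _).le
  · exact Real.exp_le_exp.mpr
      (div_le_div_of_nonneg_right (hdiam x₀ hx₀ y hyD) (by positivity))
end
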